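/- arXiv:0705.2253 — 3 statements merged into one kernel-verified Lean document; each statement's English description precedes it below -/
import Mathlib

section
/- Let (M,d) be a compact metric space and (G, d̃) a compact metric group acting isometrically on M (so d(gx,gy) = d(x,y) for all g ∈ G, x,y ∈ M) with d̃(g,h) ≥ sup_{x∈M} d(gx,hx) for all g,h ∈ G. Let α be a Borel probability measure on G with support H, and let P be the Markov kernel on M with P_x equal to the law of h·x when h is drawn from α. Suppose there exist a Borel probability measure μ_* on M, an integer τ ≥ 1, ε > 0, and p ≥ 1 such that W_{d,p}(P_x^τ, μ_*) ≤ ε for every x ∈ M. Then τ · ln C̃_H(ε/τ) ≥ ln N_M(8ε) − ln 2, where N_M(r) is the largest cardinality of a subset S ⊆ M whose points are at pairwise distances > r, and C̃_H(r) is the minimal number of open d̃-balls of radius r needed to cover H. -/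
open MeasureTheory ENNReal Filter Topology Matrix

noncomputable section

/-- `η` is a coupling of `μ` and `ν`: its two marginals are `μ` and `ν`. -/
def IsCoupling {X : Type*} [MeasurableSpace X] (η : Measure (X × X)) (μ ν : Measure X) : Prop :=
  η.map Prod.fst = μ ∧ η.map Prod.snd = ν

/-- The `L^p` transportation cost (Wasserstein) distance associated with the distance
function `d`, with values in `ℝ≥0∞`:
`W_{d,p}(μ,ν) = inf { (∫ d(x,y)^p dη)^{1/p} : η a coupling of (μ,ν) }`. -/
def wassersteinE {X : Type*} [MeasurableSpace X] (d : X → X → ℝ≥0∞) (p : ℝ)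
    (μ ν : Measure X) : ℝ≥0∞ :=
  ⨅ (η : Measure (X × X)) (_ : IsCoupling η μ ν), (∫⁻ z, d z.1 z.2 ^ p ∂η) ^ (1 / p)

/-- `t` iterated steps of the Markov transition kernel `P`, started from the initial
distribution `μ` (so `kernelIterate P t μ = μP^t`). -/
def kernelIterate {X : Type*} [MeasurableSpace X] (P : X → Measure X) :
    ℕ → Measure X → Measure X
  | 0, μ => μ
  | t + 1, μ => (kernelIterate P t μ).bind P

/-- The `r`-packing number of `M`: the largest cardinality of a subset of `M` whose points
are at pairwise distances `> r`. -/
def packingNumber (M : Type*) [MetricSpace M] (r : ℝ) : ℕ :=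
  sSup {k | ∃ S : Finset M, S.card = k ∧ ∀ x ∈ S, ∀ y ∈ S, x ≠ y → r < dist x y}

/-- The `r`-covering number of the subset `H`: the minimal number of open balls of radius
`r` needed to cover `H`. -/
def coveringNumber {G : Type*} [MetricSpace G] (H : Set G) (r : ℝ) : ℕ :=
  sInf {k | ∃ T : Finset G, T.card = k ∧ H ⊆ ⋃ g ∈ T, Metric.ball g r}

/-- The (topological) support of a measure: the set of points all of whose open
neighbourhoods have positive measure. -/
def measureSupport {G : Type*} [TopologicalSpace G] [MeasurableSpace G] (α : Measure G) :
    Set G :=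
  {g | ∀ U : Set G, IsOpen U → g ∈ U → 0 < α U}

/-!
By Markov's inequality, a measure within `ε` of the law of the walk at time `τ` gives mass at least
`1 - (ε / δ) ^ p` to the `δ`-thickening of any set carrying that law. If the balls of radius `r`
about a finite set `T` cover the support of the steps, the walk from `x` is at time `τ` within
`τ r` of a point of `T ^ τ • {x}`, so the balls of radius `R = δ + τ r` about these points have
total mass at least `1 - (ε / δ) ^ p`. Now let `x` range over a `2R`-separated set `S` and count
twice: for each fixed word `w ∈ T ^ τ` the balls about the points `w • x`, `x ∈ S`, are disjoint,
because `w` acts by an isometry, and so have total mass at most `1`. Hence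
`|S| (1 - (ε / δ) ^ p) ≤ |T| ^ τ`; the theorem is the case `r = ε / τ`, `δ = 3 ε`.
-/

open scoped Pointwise

section Wasserstein

variable {X : Type*} [PseudoEMetricSpace X] [MeasurableSpace X] [OpensMeasurableSpace X]
  {μ ν : Measure X} {p : ℝ} {A : Set X}

lemma lintegral_infEDist_rpow_le_wassersteinE (hp : 0 ≤ p) (hA : ∀ᵐ y ∂ν, y ∈ A) :
    (∫⁻ z, Metric.infEDist z A ^ p ∂μ) ^ (1 / p) ≤ wassersteinE edist p ν μ := by
  refine le_iInf₂ fun η hη => ENNReal.rpow_le_rpow ?_ (by positivity)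
  have hfst : ∀ᵐ z ∂η, z.1 ∈ A := ae_of_ae_map measurable_fst.aemeasurable (hη.1.symm ▸ hA)
  rw [← hη.2, lintegral_map (by fun_prop) measurable_snd]
  refine lintegral_mono_ae (hfst.mono fun z hz => ENNReal.rpow_le_rpow ?_ hp)
  exact edist_comm z.2 z.1 ▸ Metric.infEDist_le_edist_of_mem hz

lemma ofReal_mul_measure_compl_thickening_rpow_le_wassersteinE (hp : 0 < p)
    (hA : ∀ᵐ y ∂ν, y ∈ A) (δ : ℝ) :
    ENNReal.ofReal δ * μ (Metric.thickening δ A)ᶜ ^ (1 / p) ≤ wassersteinE edist p ν μ := by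
  have hfar : (Metric.thickening δ A)ᶜ ⊆ {z | ENNReal.ofReal δ ^ p ≤ Metric.infEDist z A ^ p} :=
    fun _ hz => ENNReal.rpow_le_rpow (not_lt.1 hz) hp.le
  calc ENNReal.ofReal δ * μ (Metric.thickening δ A)ᶜ ^ (1 / p)
      = (ENNReal.ofReal δ ^ p * μ (Metric.thickening δ A)ᶜ) ^ (1 / p) := by
        rw [ENNReal.mul_rpow_of_nonneg _ _ (by positivity), one_div, ENNReal.rpow_rpow_inv hp.ne']
    _ ≤ (∫⁻ z, Metric.infEDist z A ^ p ∂μ) ^ (1 / p) := by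
        gcongr
        exact (mul_le_mul_right (measure_mono hfar) _).trans
          (mul_meas_ge_le_lintegral (by fun_prop) _)
    _ ≤ wassersteinE edist p ν μ := lintegral_infEDist_rpow_le_wassersteinE hp.le hA

lemma one_sub_rpow_le_measureReal_thickening [IsProbabilityMeasure μ] {ε δ : ℝ} (hε : 0 ≤ ε)
    (hδ : 0 < δ) (hp : 0 < p) (hA : ∀ᵐ y ∂ν, y ∈ A)
    (hW : wassersteinE edist p ν μ ≤ ENNReal.ofReal ε) :
    1 - (ε / δ) ^ p ≤ μ.real (Metric.thickening δ A) := by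
  have hroot : δ * μ.real (Metric.thickening δ A)ᶜ ^ (1 / p) ≤ ε := by
    have h := ENNReal.toReal_mono ENNReal.ofReal_ne_top
      ((ofReal_mul_measure_compl_thickening_rpow_le_wassersteinE hp hA δ).trans hW)
    rwa [ENNReal.toReal_mul, ENNReal.toReal_ofReal hδ.le, ← ENNReal.toReal_rpow,
      ENNReal.toReal_ofReal hε] at h
  have hcompl : μ.real (Metric.thickening δ A)ᶜ ≤ (ε / δ) ^ p := by
    rw [mul_comm, ← le_div_iff₀ hδ, one_div] at hroot
    exact (Real.rpow_inv_le_iff_of_pos measureReal_nonneg (by positivity) hp).1 hroot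
  rw [probReal_compl_eq_one_sub Metric.isOpen_thickening.measurableSet] at hcompl
  linarith

end Wasserstein

section MarkovChain

variable {X : Type*} [MeasurableSpace X]

lemma ae_bind_of_ae_ae {μ : Measure X} {P : X → Measure X} (hP : Measurable P) {A : Set X}
    (hA : MeasurableSet A) (h : ∀ᵐ y ∂μ, ∀ᵐ z ∂P y, z ∈ A) : ∀ᵐ z ∂μ.bind P, z ∈ A := by
  change μ.bind P Aᶜ = 0
  rw [Measure.bind_apply hA.compl hP.aemeasurable]
  exact lintegral_eq_zero_of_ae_eq_zero h

lemma ae_mem_kernelIterate {P : X → Measure X} (hP : Measurable P) {μ : Measure X}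
    {A : ℕ → Set X} (hA : ∀ t, MeasurableSet (A t)) (hinit : ∀ᵐ y ∂μ, y ∈ A 0)
    (hstep : ∀ t, ∀ y ∈ A t, ∀ᵐ z ∂P y, z ∈ A (t + 1)) (t : ℕ) :
    ∀ᵐ y ∂kernelIterate P t μ, y ∈ A t := by
  induction t with
  | zero => exact hinit
  | succ t ih => exact ae_bind_of_ae_ae hP (hA (t + 1)) (ih.mono (hstep t))

end MarkovChain

lemma measureSupport_eq_support {G : Type*} [TopologicalSpace G] [MeasurableSpace G]
    (α : Measure G) : measureSupport α = α.support := by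
  rw [Measure.support_eq_forall_isOpen]
  exact Set.ext fun g => forall_congr' fun U => forall_comm

lemma exists_card_eq_coveringNumber {G : Type*} [MetricSpace G] {H : Set G}
    (hH : TotallyBounded H) {r : ℝ} (hr : 0 < r) :
    ∃ T : Finset G, T.card = coveringNumber H r ∧ H ⊆ ⋃ g ∈ T, Metric.ball g r := by
  refine Nat.sInf_mem (s := {k | ∃ T : Finset G, T.card = k ∧ H ⊆ ⋃ g ∈ T, Metric.ball g r}) ?_
  obtain ⟨T, hTfin, hT⟩ := Metric.totallyBounded_iff.1 hH r hr
  exact ⟨_, hTfin.toFinset, rfl, by simpa using hT⟩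

lemma packingNumber_le {M : Type*} [MetricSpace M] {r : ℝ} {n : ℕ}
    (h : ∀ S : Finset M, (S : Set M).Pairwise (fun x y => r < dist x y) → S.card ≤ n) :
    packingNumber M r ≤ n := by
  refine csSup_le' ?_
  rintro k ⟨S, rfl, hS⟩
  exact h S fun x hx y hy => hS x hx y hy

section Action

/-- The transition kernel of the walk on `M` whose steps are `y ↦ g • y` with `g` of law `α`. -/
def walkKernel {M G : Type*} [MeasurableSpace M] [MeasurableSpace G] [SMul G M] (α : Measure G)
    (y : M) : Measure M :=
  α.map fun g => g • y

lemma measurable_walkKernel {M G : Type*} [MeasurableSpace M] [MeasurableSpace G] [SMul G M]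
    [MeasurableSMul₂ G M] (α : Measure G) [SFinite α] :
    Measurable (walkKernel α : M → Measure M) := by
  have hmap (y : M) : walkKernel α y = (α.map fun g => (g, y)).map fun q => q.1 • q.2 :=
    (Measure.map_map measurable_smul measurable_prodMk_right).symm
  simp_rw [funext hmap]
  exact (Measure.measurable_map _ measurable_smul).comp Measurable.map_prodMk_right

variable {M G : Type*} [PseudoEMetricSpace M] [PseudoEMetricSpace G]

section SMul

variable [SMul G M] [IsIsometricSMul G M]

lemma continuousSMul_of_lipschitzWith (hlip : ∀ x : M, LipschitzWith 1 fun g : G => g • x) :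
    ContinuousSMul G M :=
  ⟨continuous_prod_of_continuous_lipschitzWith _ 1 (fun g => (isometry_smul M g).continuous) hlip⟩

lemma smul_mem_cthickening_add (hlip : ∀ x : M, LipschitzWith 1 fun g : G => g • x) {r s : ℝ}
    (hr : 0 ≤ r) (hs : 0 ≤ s) {T : Set G} {A : Set M} {g : G} {y : M}
    (hg : g ∈ Metric.cthickening r T) (hy : y ∈ Metric.cthickening s A) :
    g • y ∈ Metric.cthickening (r + s) (T • A) := by
  rw [Metric.mem_cthickening_iff] at hg hy ⊢
  have hclose {h : G} (hh : h ∈ T) {a : M} (ha : a ∈ A) :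
      Metric.infEDist (g • y) (T • A) ≤ edist g h + edist y a :=
    calc Metric.infEDist (g • y) (T • A)
        ≤ edist (g • y) (h • a) := Metric.infEDist_le_edist_of_mem (Set.smul_mem_smul hh ha)
      _ ≤ edist (g • y) (h • y) + edist (h • y) (h • a) := edist_triangle _ _ _
      _ ≤ edist g h + edist y a := by
        rw [edist_smul_left]
        gcongr
        simpa using hlip y g h
  calc Metric.infEDist (g • y) (T • A)
      ≤ Metric.infEDist g T + Metric.infEDist y A := by
        simp only [Metric.infEDist, ENNReal.iInf_add, ENNReal.add_iInf]
        exact le_iInf₂ fun a ha => le_iInf₂ fun h hh => hclose hh ha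
    _ ≤ ENNReal.ofReal r + ENNReal.ofReal s := add_le_add hg hy
    _ = ENNReal.ofReal (r + s) := (ENNReal.ofReal_add hr hs).symm

end SMul

variable [MeasurableSpace M] [BorelSpace M]
  [SecondCountableTopology G] [MeasurableSpace G] [BorelSpace G]
  [Monoid G] [MulAction G M] [IsIsometricSMul G M]

lemma ae_mem_cthickening_kernelIterate_walkKernel
    (hlip : ∀ x : M, LipschitzWith 1 fun g : G => g • x) (α : Measure G) [SFinite α] {r : ℝ}
    (hr : 0 ≤ r) {T : Set G} (hT : measureSupport α ⊆ Metric.cthickening r T) (x : M) (t : ℕ) :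
    ∀ᵐ y ∂kernelIterate (walkKernel α) t (Measure.dirac x),
      y ∈ Metric.cthickening (t * r) (T ^ t • {x}) := by
  have := continuousSMul_of_lipschitzWith hlip
  have hmeas (t : ℕ) : MeasurableSet (Metric.cthickening (t * r) (T ^ t • {x})) :=
    Metric.isClosed_cthickening.measurableSet
  refine ae_mem_kernelIterate (measurable_walkKernel α) hmeas ?_ (fun t y hy => ?_) t
  · exact (ae_dirac_iff (hmeas 0)).2 (Metric.self_subset_cthickening _ (by simp))
  · refine (ae_map_iff (by fun_prop) (hmeas (t + 1))).2 ?_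
    have hsupport : ∀ᵐ g ∂α, g ∈ measureSupport α :=
      measureSupport_eq_support α ▸ Measure.support_mem_ae
    filter_upwards [hsupport] with g hg
    have h := smul_mem_cthickening_add hlip hr (by positivity) (hT hg) hy
    rwa [smul_smul, ← pow_succ', show r + t * r = (t + 1 : ℕ) * r by push_cast; ring] at h

end Action

section Packing

variable {M G : Type*} [PseudoMetricSpace M] [MeasurableSpace M] [BorelSpace M]

lemma card_mul_le_card_of_le_measureReal_biUnion_ball [SMul G M] [IsIsometricSMul G M]
    (μ : Measure M) [IsProbabilityMeasure μ] {W : Finset G} {S : Finset M} {R c : ℝ}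
    (hS : (S : Set M).Pairwise fun x y => 2 * R ≤ dist x y)
    (hc : ∀ x ∈ S, c ≤ μ.real (⋃ w ∈ W, Metric.ball (w • x) R)) :
    S.card * c ≤ W.card := by
  have hdisj (w : G) : (S : Set M).PairwiseDisjoint fun x => Metric.ball (w • x) R :=
    fun x hx y hy hxy => Metric.ball_disjoint_ball <| by
      rw [dist_smul, ← two_mul]
      exact hS hx hy hxy
  calc S.card * c = ∑ _x ∈ S, c := by rw [Finset.sum_const, nsmul_eq_mul]
    _ ≤ ∑ x ∈ S, ∑ w ∈ W, μ.real (Metric.ball (w • x) R) :=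
      Finset.sum_le_sum fun x hx => (hc x hx).trans (measureReal_biUnion_finset_le _ _)
    _ = ∑ w ∈ W, ∑ x ∈ S, μ.real (Metric.ball (w • x) R) := Finset.sum_comm
    _ ≤ ∑ _w ∈ W, 1 := Finset.sum_le_sum fun w _ =>
      (sum_measureReal_le_measureReal_univ (fun _ _ => measurableSet_ball) (hdisj w)).trans_eq
        probReal_univ
    _ = W.card := by simp

variable [PseudoMetricSpace G] [SecondCountableTopology G] [MeasurableSpace G] [BorelSpace G]
  [Monoid G] [MulAction G M] [IsIsometricSMul G M]

lemma card_mul_one_sub_rpow_le_card_pow (hlip : ∀ x : M, LipschitzWith 1 fun g : G => g • x)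
    {α : Measure G} [SFinite α] {μ : Measure M} [IsProbabilityMeasure μ] {τ : ℕ} {ε δ r p : ℝ}
    (hε : 0 ≤ ε) (hδ : 0 < δ) (hr : 0 ≤ r) (hp : 0 < p)
    (hmix : ∀ x : M, wassersteinE edist p
      (kernelIterate (walkKernel α) τ (Measure.dirac x)) μ ≤ ENNReal.ofReal ε)
    {T : Finset G} (hT : measureSupport α ⊆ ⋃ g ∈ T, Metric.ball g r)
    {S : Finset M} (hS : (S : Set M).Pairwise fun x y => 2 * (δ + τ * r) ≤ dist x y) :
    S.card * (1 - (ε / δ) ^ p) ≤ (T.card : ℝ) ^ τ := by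
  classical
  have hcover : measureSupport α ⊆ Metric.cthickening r (T : Set G) := by
    refine hT.trans ?_
    simpa only [Metric.thickening_eq_biUnion_ball, Finset.mem_coe]
      using Metric.thickening_subset_cthickening r (T : Set G)
  have hballs (x : M) : Metric.thickening δ (Metric.cthickening (τ * r) ((T : Set G) ^ τ • {x})) ⊆
      ⋃ w ∈ T ^ τ, Metric.ball (w • x) (δ + τ * r) := by
    refine (Metric.thickening_cthickening_subset δ (by positivity) _).trans_eq ?_
    rw [Metric.thickening_eq_biUnion_ball, Set.smul_singleton, Set.biUnion_image, ← Finset.coe_pow]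
    rfl
  have hmass (x : M) : 1 - (ε / δ) ^ p ≤
      μ.real (⋃ w ∈ T ^ τ, Metric.ball (w • x) (δ + τ * r)) :=
    (one_sub_rpow_le_measureReal_thickening hε hδ hp
      (ae_mem_cthickening_kernelIterate_walkKernel hlip α hr hcover x τ) (hmix x)).trans
      (measureReal_mono (hballs x) (measure_ne_top μ _))
  calc S.card * (1 - (ε / δ) ^ p) ≤ ((T ^ τ).card : ℝ) :=
      card_mul_le_card_of_le_measureReal_biUnion_ball μ hS fun x _ => hmass x
    _ ≤ (T.card : ℝ) ^ τ := by exact_mod_cast Finset.card_pow_le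

end Packing

lemma log_sub_log_two_le_mul_log {n c k : ℕ} (h : n ≤ 2 * c ^ k) :
    Real.log n - Real.log 2 ≤ k * Real.log c := by
  rcases n.eq_zero_or_pos with rfl | hn
  · have hc : 0 ≤ k * Real.log c := mul_nonneg k.cast_nonneg (Real.log_natCast_nonneg c)
    rw [Nat.cast_zero, Real.log_zero]
    linarith [Real.log_nonneg one_le_two]
  · rw [sub_le_iff_le_add', ← Real.log_pow, ← Real.log_mul two_ne_zero]
    · exact Real.log_le_log (by exact_mod_cast hn) (by exact_mod_cast h)
    · have : c ^ k ≠ 0 := by lia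
      exact_mod_cast this

theorem group_action_walk_lower_bound_general
    {M G : Type*} [MetricSpace M] [MeasurableSpace M] [BorelSpace M]
    [MetricSpace G] [SecondCountableTopology G] [MeasurableSpace G] [BorelSpace G]
    [Monoid G] [MulAction G M] [IsIsometricSMul G M]
    (hlip : ∀ x : M, LipschitzWith 1 fun g : G => g • x)
    {α : Measure G} [SFinite α] (hα : TotallyBounded (measureSupport α))
    {μ : Measure M} [IsProbabilityMeasure μ] {τ : ℕ} (hτ : 1 ≤ τ) {ε p : ℝ} (hε : 0 < ε)
    (hp : 1 ≤ p)
    (hmix : ∀ x : M, wassersteinE edist p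
      (kernelIterate (walkKernel α) τ (Measure.dirac x)) μ ≤ ENNReal.ofReal ε) :
    Real.log (packingNumber M (8 * ε)) - Real.log 2 ≤
      τ * Real.log (coveringNumber (measureSupport α) (ε / τ)) := by
  have hr : 0 < ε / τ := by positivity
  obtain ⟨T, hTcard, hT⟩ := exists_card_eq_coveringNumber hα hr
  rw [← hTcard]
  -- The count bounds every packing, so `packingNumber` is not the junk value `0` of an unbounded
  -- `sSup`.
  refine log_sub_log_two_le_mul_log (packingNumber_le fun S hS => ?_)
  have hradius : 2 * (3 * ε + τ * (ε / τ)) = 8 * ε := by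
    rw [mul_div_cancel₀ _ (by positivity)]
    ring
  have hhalf : (ε / (3 * ε)) ^ p ≤ 1 / 2 :=
    calc (ε / (3 * ε)) ^ p = (1 / 3) ^ p := by rw [div_mul_cancel_right₀ hε.ne', one_div]
      _ ≤ 1 / 3 := Real.rpow_le_self_of_le_one (by norm_num) (by norm_num) hp
      _ ≤ 1 / 2 := by norm_num
  have hcount : S.card * (1 - (ε / (3 * ε)) ^ p) ≤ (T.card : ℝ) ^ τ :=
    card_mul_one_sub_rpow_le_card_pow hlip hε.le (by positivity) hr.le (by positivity) hmix hT
      (hradius ▸ hS.mono' fun _ _ => le_of_lt)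
  have hbound : (S.card : ℝ) ≤ 2 * (T.card : ℝ) ^ τ :=
    calc (S.card : ℝ) = 2 * (S.card * (1 / 2)) := by ring
      _ ≤ 2 * (S.card * (1 - (ε / (3 * ε)) ^ p)) := by gcongr; linarith
      _ ≤ 2 * (T.card : ℝ) ^ τ := by gcongr
  exact_mod_cast hbound

/-- **Theorem 6.** Let a compact metric group `(G,d̃)` act isometrically on a compact
metric space `(M,d)` with `d̃(g,h) ≥ d(gx,hx)` for all `x`, let `α` be a probability
measure on `G` with support `H`, and let `P` be the induced kernel `P_x = law of h·x`,
`h ∼ α`.  If `W_{d,p}(P_x^τ, μ⋆) ≤ ε` for every `x ∈ M`, then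
`τ · ln C̃_H(ε/τ) ≥ ln N_M(8ε) - ln 2`. -/
theorem group_action_walk_lower_bound
    {M G : Type*} [MetricSpace M] [CompactSpace M] [MeasurableSpace M] [BorelSpace M]
    [MetricSpace G] [CompactSpace G] [MeasurableSpace G] [BorelSpace G]
    [Group G] [MulAction G M]
    (hiso : ∀ (g : G) (x y : M), dist (g • x) (g • y) = dist x y)
    (hdom : ∀ (g h : G) (x : M), dist (g • x) (h • x) ≤ dist g h)
    (α : Measure G) (hα : IsProbabilityMeasure α)
    (μstar : Measure M) (hμstar : IsProbabilityMeasure μstar)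
    (τ : ℕ) (hτ : 1 ≤ τ) (ε : ℝ) (hε : 0 < ε) (p : ℝ) (hp : 1 ≤ p)
    (hmix : ∀ x : M,
      wassersteinE edist p
        (kernelIterate (fun y => α.map fun g => g • y) τ (Measure.dirac x)) μstar ≤
        ENNReal.ofReal ε) :
    Real.log (packingNumber M (8 * ε)) - Real.log 2 ≤
      (τ : ℝ) * Real.log (coveringNumber (measureSupport α) (ε / (τ : ℝ))) := by
  have : IsIsometricSMul G M := ⟨fun g => Isometry.of_dist_eq (hiso g)⟩
  exact group_action_walk_lower_bound_general
    (fun x => LipschitzWith.mk_one fun g h => hdom g h x)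
    (isCompact_univ.totallyBounded.subset (Set.subset_univ _)) hτ hε hp hmix

end
end

section
/- There exist constants φ, ψ > 0 such that for every integer n ≥ 10 and every real r with 0 < r < √n/10, the Haar probability measure H on SO(n) satisfies H({x ∈ SO(n) : ‖x − id‖_hs < r}) ≤ (e^φ · r/√n)^{ψ n²}. -/
open MeasureTheory ENNReal Filter Topology Matrix

noncomputable section

/-- The (Borel) product measurable structure on matrices. -/
instance matrixMeasurableSpace {m n R : Type*} [MeasurableSpace R] :
    MeasurableSpace (Matrix m n R) :=
  (inferInstance : MeasurableSpace (m → n → R))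

/-- A Haar probability measure for the multiplicative set `S`, viewed as a measure on the
ambient space: a probability measure carried by `S` that is invariant under left and right
translations by all elements of `S`. -/
def IsHaarLike {X : Type*} [MeasurableSpace X] [Mul X] (S : Set X) (μ : Measure X) : Prop :=
  IsProbabilityMeasure μ ∧ μ Sᶜ = 0 ∧
    ∀ a ∈ S, μ.map (fun x => a * x) = μ ∧ μ.map (fun x => x * a) = μ

/-- The Haar probability measure of a compact matrix group `S` (such as `SO(n)` or `U(n)`),
viewed as a measure on the ambient matrix space.  For such `S` a translation-invariant
probability measure exists and is unique, so `haarLike S` is *the* Haar probability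
measure of `S`. -/
def haarLike {X : Type*} [MeasurableSpace X] [Mul X] (S : Set X) : Measure X := by
  classical exact if h : ∃ μ, IsHaarLike S μ then h.choose else 0

/-- The length of the curve `γ` over `[0,1]`, w.r.t. the distance function `d`:
the supremum, over all partitions `0 = t 0 ≤ t 1 ≤ ⋯ ≤ t k = 1` of `[0,1]`, of the sums of
the distances between consecutive points of the curve. -/
def pathLengthE {X : Type*} (d : X → X → ℝ≥0∞) (γ : ℝ → X) : ℝ≥0∞ :=
  ⨆ (k : ℕ) (t : Fin (k + 1) → ℝ) (_ : Monotone t) (_ : t 0 = 0) (_ : t (Fin.last k) = 1),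
    ∑ i : Fin k, d (γ (t i.castSucc)) (γ (t i.succ))

/-- The intrinsic (length) distance on the set `S` induced by the distance function `d`:
the infimum of `d`-lengths of continuous paths joining `a` to `b` inside `S`. -/
def intrinsicDistE {X : Type*} [TopologicalSpace X] (d : X → X → ℝ≥0∞) (S : Set X)
    (a b : X) : ℝ≥0∞ :=
  ⨅ (γ : ℝ → X) (_ : ContinuousOn γ (Set.Icc 0 1)) (_ : Set.MapsTo γ (Set.Icc 0 1) S)
    (_ : γ 0 = a) (_ : γ 1 = b), pathLengthE d γ

/-- The special orthogonal group `SO(n)`, as a subset of the `n × n` real matrices. -/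
def SO (n : ℕ) : Set (Matrix (Fin n) (Fin n) ℝ) :=
  {a | a * aᵀ = 1 ∧ a.det = 1}

/-- The Hilbert–Schmidt (Frobenius) distance `‖a - b‖_hs = √(Tr((a-b)ᵀ(a-b)))` between real
matrices, as an `ℝ≥0∞`-valued distance function. -/
def hsDist {n : ℕ} (a b : Matrix (Fin n) (Fin n) ℝ) : ℝ≥0∞ :=
  ENNReal.ofReal (Real.sqrt (Matrix.trace ((a - b)ᵀ * (a - b))))

/-- The intrinsic (Riemannian/length) metric `D` on `SO(n)` induced by the Hilbert–Schmidt
norm: the infimum of `hs`-lengths of continuous paths inside `SO(n)`. -/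
def DSO (n : ℕ) (a b : Matrix (Fin n) (Fin n) ℝ) : ℝ≥0∞ :=
  intrinsicDistE hsDist (SO n) a b

/-!
A matrix within Hilbert–Schmidt distance `r` of the identity has at least half of its columns within
`√2 r / √n` of the corresponding basis vectors, which leaves at most `2 ^ n` choices for these
columns.

Fix such a choice and let `δ` be the allowed distance. Constraining one more column `e` when `k`
columns are constrained already costs a factor `(2 δ) ^ (n - k - 1)`: take a maximal
`2 δ`-separated subset of the unit ball of the orthogonal complement of the `k + 1` basis vectors,
which has at least `(2 δ) ^ (-(n - k - 1))` points, and lift it to the unit hemisphere with pole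
`e`. For each lifted point there is a rotation that sends it to `e` and fixes the other `k` basis
vectors. The preimages under these rotations of the event with `k + 1` constraints are disjoint, of
equal measure, and contained in the event with `k` constraints. Multiplying the factors for
`k < n / 2` gives an exponent of order `n ^ 2`, which absorbs `2 ^ n`.
-/

open Metric Module Set
open scoped NNReal RealInnerProductSpace Finset

section Packing

variable {E : Type*} [NormedAddCommGroup E] [NormedSpace ℝ E] [FiniteDimensional ℝ E]

theorem one_le_card_mul_pow_finrank_of_isCover_ball {ε : ℝ≥0} {t : Finset E}
    (ht : IsCover ε (ball (0 : E) 1) t) : 1 ≤ (#t : ℝ≥0∞) * (ε : ℝ≥0∞) ^ finrank ℝ E := by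
  borelize E
  let μ : Measure E := Measure.addHaar
  have hμ_le : 1 * μ (ball 0 1) ≤ (#t * (ε : ℝ≥0∞) ^ finrank ℝ E) * μ (ball 0 1) := by
    calc 1 * μ (ball 0 1) ≤ μ (⋃ x ∈ t, closedBall x ε) := by
          rw [one_mul]
          exact measure_mono ht.subset_iUnion_closedBall
      _ ≤ ∑ x ∈ t, μ (closedBall x ε) := measure_biUnion_finset_le _ _
      _ = _ := by
          simp [μ, Measure.addHaar_closedBall, mul_assoc, ENNReal.ofReal_pow]
  exact (ENNReal.mul_le_mul_iff_left (measure_ball_pos μ _ one_pos).ne'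
    measure_ball_lt_top.ne).1 hμ_le

theorem packingNumber_ne_top_of_totallyBounded {X : Type*} [PseudoEMetricSpace X] {ε : ℝ≥0}
    (hε : ε ≠ 0) {A : Set X} (hA : TotallyBounded A) : packingNumber ε A ≠ ⊤ := by
  obtain ⟨N, -, hN, hcover⟩ :=
    exists_finite_isCover_of_totallyBounded (ε := ε / 2) (by positivity) hA
  have hle : packingNumber (2 * (ε / 2)) A ≤ N.encard :=
    (packingNumber_two_mul_le_externalCoveringNumber _ A).trans
      hcover.externalCoveringNumber_le_encard
  rw [mul_div_cancel₀ ε two_ne_zero] at hle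
  exact (hle.trans_lt hN.encard_lt_top).ne

theorem exists_finset_isSeparated_subset_ball {ε : ℝ≥0} (hε : ε ≠ 0) :
    ∃ t : Finset E, (t : Set E) ⊆ ball 0 1 ∧ IsSeparated ε (t : Set E) ∧
      1 ≤ (#t : ℝ≥0∞) * (ε : ℝ≥0∞) ^ finrank ℝ E := by
  have hpack : packingNumber ε (ball (0 : E) 1) ≠ ⊤ :=
    packingNumber_ne_top_of_totallyBounded hε
      ((isCompact_closedBall (0 : E) 1).totallyBounded.subset ball_subset_closedBall)
  have hfin : (maximalSeparatedSet ε (ball (0 : E) 1)).Finite := by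
    rwa [← encard_ne_top_iff, encard_maximalSeparatedSet hpack]
  lift maximalSeparatedSet ε (ball (0 : E) 1) to Finset E using hfin with t ht
  refine ⟨t, ht ▸ maximalSeparatedSet_subset, ht ▸ isSeparated_maximalSeparatedSet,
    one_le_card_mul_pow_finrank_of_isCover_ball (ht ▸ isCover_maximalSeparatedSet hpack)⟩

end Packing

section Orthogonality

variable {E : Type*} [NormedAddCommGroup E] [InnerProductSpace ℝ E] [FiniteDimensional ℝ E]

theorem finrank_orthogonal_span_image {ι : Type*} {b : ι → E}
    (hb : Orthonormal ℝ b) (I : Finset ι) :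
    finrank ℝ (Submodule.span ℝ (b '' I))ᗮ = finrank ℝ E - #I := by
  have hspan : finrank ℝ (Submodule.span ℝ (b '' I)) = #I := by
    rw [image_eq_range]
    exact (finrank_span_eq_card (hb.linearIndependent.comp _ Subtype.val_injective)).trans
      (Fintype.card_coe I)
  have := (Submodule.span ℝ (b '' I)).finrank_add_finrank_orthogonal
  omega

theorem det_reflection_orthogonal_span_singleton {v : E} (hv : v ≠ 0) :
    LinearMap.det (ℝ ∙ v)ᗮ.reflection.toLinearMap = -1 := by
  rw [Submodule.det_reflection, Submodule.orthogonal_orthogonal, finrank_span_singleton hv, pow_one]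

theorem exists_rotation {u v : E} (huv : ‖u‖ = ‖v‖) (hne : u + v ≠ 0) :
    ∃ g : E ≃ₗᵢ[ℝ] E, LinearMap.det g.toLinearMap = 1 ∧ g u = v ∧
      ∀ z, ⟪u, z⟫ = 0 → ⟪v, z⟫ = 0 → g z = z := by
  have hu : u ≠ 0 := by
    rintro rfl
    exact hne (by simpa [eq_comm] using huv)
  have hne' : -u - v ≠ 0 := by rwa [← neg_add', neg_ne_zero]
  refine ⟨(ℝ ∙ u)ᗮ.reflection.trans (ℝ ∙ (-u - v))ᗮ.reflection, ?_, ?_, fun z huz hvz => ?_⟩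
  · rw [LinearIsometryEquiv.toLinearEquiv_trans, LinearEquiv.coe_trans, LinearMap.det_comp,
      det_reflection_orthogonal_span_singleton hu, det_reflection_orthogonal_span_singleton hne']
    norm_num
  · rw [LinearIsometryEquiv.trans_apply, Submodule.reflection_orthogonalComplement_singleton_eq_neg,
      Submodule.reflection_sub (by rw [norm_neg, huv])]
  · have hfix {w : E} (hw : ⟪w, z⟫ = 0) : (ℝ ∙ w)ᗮ.reflection z = z :=
      Submodule.reflection_mem_subspace_eq_self
        (Submodule.mem_orthogonal_singleton_iff_inner_right.2 hw)
    rw [LinearIsometryEquiv.trans_apply, hfix huz,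
      hfix (by rw [inner_sub_left, inner_neg_left, huz, hvz, neg_zero, sub_zero])]

end Orthogonality

section Hemisphere

variable {E : Type*} [NormedAddCommGroup E] [InnerProductSpace ℝ E]

/-- The point of the upper unit hemisphere with pole `e` lying above the point `x` of the
equatorial disc. -/
def hemisphereLift (e x : E) : E := x + √(1 - ‖x‖ ^ 2) • e

theorem norm_hemisphereLift {e x : E} (he : ‖e‖ = 1) (hex : ⟪e, x⟫ = 0) (hx : ‖x‖ ≤ 1) :
    ‖hemisphereLift e x‖ = 1 := by
  have hsq : ‖hemisphereLift e x‖ ^ 2 = 1 := by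
    rw [hemisphereLift, norm_add_sq_real, inner_smul_right, real_inner_comm, hex, norm_smul, he,
      mul_one, Real.norm_eq_abs, sq_abs, Real.sq_sqrt (by nlinarith [norm_nonneg x])]
    ring
  exact (pow_eq_one_iff_of_nonneg (norm_nonneg _) two_ne_zero).1 hsq

theorem inner_hemisphereLift {e x : E} (he : ‖e‖ = 1) (hex : ⟪e, x⟫ = 0) :
    ⟪e, hemisphereLift e x⟫ = √(1 - ‖x‖ ^ 2) := by
  simp [hemisphereLift, inner_add_right, inner_smul_right, hex, he]

theorem dist_le_dist_hemisphereLift {e x y : E} (hx : ⟪e, x⟫ = 0) (hy : ⟪e, y⟫ = 0) :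
    dist x y ≤ dist (hemisphereLift e x) (hemisphereLift e y) := by
  have hdecomp : hemisphereLift e x - hemisphereLift e y =
      (x - y) + (√(1 - ‖x‖ ^ 2) - √(1 - ‖y‖ ^ 2)) • e := by
    rw [hemisphereLift, hemisphereLift]
    module
  have horth : ⟪x - y, (√(1 - ‖x‖ ^ 2) - √(1 - ‖y‖ ^ 2)) • e⟫ = 0 := by
    rw [inner_smul_right, real_inner_comm, inner_sub_right, hx, hy, sub_zero, mul_zero]
  rw [dist_eq_norm, dist_eq_norm, hdecomp]
  refine le_of_sq_le_sq ?_ (norm_nonneg _)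
  rw [norm_add_sq_real, horth]
  nlinarith

theorem exists_rotation_hemisphereLift [FiniteDimensional ℝ E] {e x : E} (he : ‖e‖ = 1)
    (hex : ⟪e, x⟫ = 0) (hx : ‖x‖ ≤ 1) :
    ∃ g : E ≃ₗᵢ[ℝ] E, LinearMap.det g.toLinearMap = 1 ∧ g (hemisphereLift e x) = e ∧
      ∀ z, ⟪e, z⟫ = 0 → ⟪x, z⟫ = 0 → g z = z := by
  have hne : hemisphereLift e x + e ≠ 0 := by
    intro h
    have hinner : ⟪e, hemisphereLift e x + e⟫ = √(1 - ‖x‖ ^ 2) + 1 := by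
      rw [inner_add_right, inner_hemisphereLift he hex, real_inner_self_eq_norm_sq, he, one_pow]
    rw [h, inner_zero_right] at hinner
    linarith [Real.sqrt_nonneg (1 - ‖x‖ ^ 2)]
  obtain ⟨g, hdet, hg, hfix⟩ :=
    exists_rotation ((norm_hemisphereLift he hex hx).trans he.symm) hne
  refine ⟨g, hdet, hg, fun z hez hxz => hfix z ?_ hez⟩
  rw [hemisphereLift, inner_add_left, real_inner_smul_left, hxz, hez, mul_zero, add_zero]

end Hemisphere

section Estimates

theorem exists_finset_card_eq_forall_mul_lt {ι : Type*} [Fintype ι] {f : ι → ℝ} {s : ℝ} {k m : ℕ}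
    (hf : ∀ i, 0 ≤ f i) (hs : ∑ i, f i < s) (hkm : k + m ≤ Fintype.card ι) :
    ∃ I : Finset ι, #I = k ∧ ∀ i ∈ I, m * f i < s := by
  classical
  let B : Finset ι := {i | s ≤ m * f i}
  have hB : #B ≤ m := by
    have hle : #B * s ≤ m * s := by
      calc #B * s = ∑ _i ∈ B, s := by rw [Finset.sum_const, nsmul_eq_mul]
        _ ≤ ∑ i ∈ B, m * f i := Finset.sum_le_sum fun i hi => (Finset.mem_filter.1 hi).2
        _ ≤ ∑ i, m * f i := Finset.sum_le_univ_sum_of_nonneg fun i => by have := hf i; positivity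
        _ ≤ m * s := by
          rw [← Finset.mul_sum]
          gcongr
    exact_mod_cast le_of_mul_le_mul_right hle ((Finset.sum_nonneg fun i _ => hf i).trans_lt hs)
  have hk : k ≤ #Bᶜ := by
    rw [Finset.card_compl]
    omega
  obtain ⟨I, hI, hcard⟩ := Finset.exists_subset_card_eq hk
  exact ⟨I, hcard, fun i hi => by simpa [B] using hI hi⟩

theorem sq_le_sum_range_sub_succ {d k : ℕ} (hk : 2 * k ≤ d) :
    k ^ 2 ≤ ∑ l ∈ Finset.range k, (d - (l + 1)) := by
  calc k ^ 2 = ∑ _l ∈ Finset.range k, k := by simp [sq]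
    _ ≤ ∑ l ∈ Finset.range k, (d - (l + 1)) := by
      refine Finset.sum_le_sum fun l hl => ?_
      rw [Finset.mem_range] at hl
      omega

theorem two_pow_mul_pow_half_sq_le {n : ℕ} (hn : 2 ≤ n) {c : ℝ} (hc : 0 ≤ c) (hc' : c ≤ 1) :
    2 ^ n * c ^ (n / 2) ^ 2 ≤ (32 * c) ^ ((n : ℝ) ^ 2 / 9) := by
  have hnR : (2 : ℝ) ≤ n := by exact_mod_cast hn
  have htwo : (2 : ℝ) ^ n ≤ 32 ^ ((n : ℝ) ^ 2 / 9) := by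
    rw [show (32 : ℝ) = 2 ^ (5 : ℝ) by norm_num, ← Real.rpow_mul two_pos.le, ← Real.rpow_natCast]
    exact Real.rpow_le_rpow_of_exponent_le one_le_two (by nlinarith)
  have hhalf : (n : ℝ) ^ 2 / 9 ≤ ((n / 2) ^ 2 : ℕ) := by
    have : n ≤ 3 * (n / 2) := by omega
    have : (n : ℝ) ≤ 3 * (n / 2 : ℕ) := by exact_mod_cast this
    push_cast
    nlinarith
  rw [Real.mul_rpow (by norm_num) hc, ← Real.rpow_natCast c]
  gcongr ?_ * ?_
  exact Real.rpow_le_rpow_of_exponent_ge' hc hc' (by positivity) hhalf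

end Estimates

section InvariantMeasure

theorem card_mul_measure_le_of_pairwiseDisjoint_preimage {α κ : Type*} [MeasurableSpace α]
    {μ : Measure α} {t : Finset κ} {f : κ → α → α} {A B : Set α} (hA : MeasurableSet A)
    (hf : ∀ i ∈ t, MeasurePreserving (f i) μ μ) (hAB : ∀ i ∈ t, f i ⁻¹' A ⊆ B)
    (hdisj : (t : Set κ).PairwiseDisjoint fun i => f i ⁻¹' A) :
    #t * μ A ≤ μ B := by
  calc #t * μ A = ∑ i ∈ t, μ (f i ⁻¹' A) := by
        rw [Finset.sum_congr rfl fun i hi => (hf i hi).measure_preimage hA.nullMeasurableSet,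
          Finset.sum_const, nsmul_eq_mul]
    _ = μ (⋃ i ∈ t, f i ⁻¹' A) :=
        (measure_biUnion_finset hdisj fun i hi => (hf i hi).measurable hA).symm
    _ ≤ μ B := measure_mono (iUnion₂_subset hAB)

variable {ι E : Type*} [NormedAddCommGroup E] [InnerProductSpace ℝ E] [MeasurableSpace E]

/-- A measure on families of vectors is rotation invariant when it is preserved by applying one
and the same rotation (linear isometry of determinant `1`) to all vectors of the family. -/
def IsRotationInvariant (μ : Measure (ι → E)) : Prop :=
  ∀ g : E ≃ₗᵢ[ℝ] E, LinearMap.det g.toLinearMap = 1 →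
    MeasurePreserving (fun x j => g (x j)) μ μ

variable [FiniteDimensional ℝ E] [BorelSpace E] {μ : Measure (ι → E)} {b : ι → E} {δ : ℝ≥0}

theorem card_mul_measure_pi_ball_insert_le [DecidableEq ι] (hμ : IsRotationInvariant μ)
    (hb : Orthonormal ℝ b) {I : Finset ι} {i : ι} (hi : i ∉ I)
    {K : Submodule ℝ E} (hK : ∀ j ∈ insert i I, ∀ x ∈ K, ⟪b j, x⟫ = 0) {t : Finset K}
    (ht : (t : Set K) ⊆ ball 0 1) (hsep : IsSeparated (2 * δ) (t : Set K)) :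
    #t * μ (((insert i I : Finset ι) : Set ι).pi fun j => ball (b j) δ) ≤
      μ ((I : Set ι).pi fun j => ball (b j) δ) := by
  have hKi (x : K) : ⟪b i, (x : E)⟫ = 0 := hK i (Finset.mem_insert_self i I) x x.2
  have hrot : ∀ x ∈ t, ∃ g : E ≃ₗᵢ[ℝ] E, LinearMap.det g.toLinearMap = 1 ∧
      g (hemisphereLift (b i) x) = b i ∧ ∀ j ∈ I, g (b j) = b j := by
    intro x hx
    obtain ⟨g, hdet, hg, hfix⟩ := exists_rotation_hemisphereLift (hb.norm_eq_one i)
      (hKi x) (mem_ball_zero_iff.1 (ht hx)).le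
    refine ⟨g, hdet, hg, fun j hj => hfix _ (hb.inner_eq_zero (ne_of_mem_of_not_mem hj hi).symm) ?_⟩
    rw [real_inner_comm, hK j (Finset.mem_insert_of_mem hj) x x.2]
  choose! g hdet hgi hgI using hrot
  refine card_mul_measure_le_of_pairwiseDisjoint_preimage
    (.pi (Finset.countable_toSet _) fun j _ => measurableSet_ball)
    (fun x hx => hμ (g x) (hdet x hx)) (fun x hx y hy j hj => ?_) fun x hx x' hx' hne => ?_
  · have hyj : g x (y j) ∈ ball (b j) δ := hy j (Finset.mem_insert_of_mem hj)
    rwa [mem_ball, ← (g x).dist_map, hgI x hx j hj]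
  · refine disjoint_left.2 fun y hy hy' => ?_
    have hnear {z} (hz : z ∈ t) (hyz : (fun j => g z (y j)) ∈
        ((insert i I : Finset ι) : Set ι).pi fun j => ball (b j) δ) :
        dist (y i) (hemisphereLift (b i) z) < δ := by
      rw [← (g z).dist_map, hgi z hz]
      exact hyz i (Finset.mem_insert_self i I)
    have hlt : dist x x' < 2 * δ := by
      calc dist x x' ≤ dist (hemisphereLift (b i) x) (hemisphereLift (b i) x') :=
            dist_le_dist_hemisphereLift (hKi x) (hKi x')
        _ ≤ dist (y i) (hemisphereLift (b i) x) + dist (y i) (hemisphereLift (b i) x') :=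
            dist_triangle_left _ _ _
        _ < 2 * δ := by linarith [hnear hx hy, hnear hx' hy']
    have hgt : 2 * δ < edist x x' := hsep hx hx' hne
    rw [edist_nndist] at hgt
    exact lt_asymm hlt (by exact_mod_cast hgt)

theorem measure_pi_ball_insert_le [DecidableEq ι] (hμ : IsRotationInvariant μ)
    (hb : Orthonormal ℝ b) (hδ : δ ≠ 0) {I : Finset ι} {i : ι} (hi : i ∉ I) :
    μ (((insert i I : Finset ι) : Set ι).pi fun j => ball (b j) δ) ≤
      (2 * δ : ℝ≥0∞) ^ (finrank ℝ E - (#I + 1)) *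
        μ ((I : Set ι).pi fun j => ball (b j) δ) := by
  obtain ⟨t, ht, hsep, hcard⟩ := exists_finset_isSeparated_subset_ball
    (E := (Submodule.span ℝ (b '' (insert i I : Finset ι)))ᗮ) (ε := 2 * δ) (by positivity)
  rw [finrank_orthogonal_span_image hb, Finset.card_insert_of_notMem hi] at hcard
  push_cast at hcard hsep
  calc μ (((insert i I : Finset ι) : Set ι).pi fun j => ball (b j) δ)
      ≤ (#t * (2 * δ : ℝ≥0∞) ^ (finrank ℝ E - (#I + 1))) *
          μ (((insert i I : Finset ι) : Set ι).pi fun j => ball (b j) δ) :=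
        le_mul_of_one_le_left' hcard
    _ = (2 * δ : ℝ≥0∞) ^ (finrank ℝ E - (#I + 1)) *
          (#t * μ (((insert i I : Finset ι) : Set ι).pi fun j => ball (b j) δ)) := by ring
    _ ≤ _ := by
        gcongr
        refine card_mul_measure_pi_ball_insert_le hμ hb hi (fun j hj x hx => ?_) ht hsep
        exact Submodule.inner_right_of_mem_orthogonal
          (Submodule.subset_span (mem_image_of_mem b hj)) hx

theorem measure_pi_ball_le [IsProbabilityMeasure μ] (hμ : IsRotationInvariant μ)
    (hb : Orthonormal ℝ b) (hδ : δ ≠ 0) (I : Finset ι) :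
    μ ((I : Set ι).pi fun j => ball (b j) δ) ≤
      (2 * δ : ℝ≥0∞) ^ ∑ m ∈ Finset.range #I, (finrank ℝ E - (m + 1)) := by
  classical
  induction I using Finset.induction_on with
  | empty => simp
  | insert i I hi ih =>
    rw [Finset.card_insert_of_notMem hi, Finset.sum_range_succ, add_comm, pow_add]
    exact (measure_pi_ball_insert_le hμ hb hδ hi).trans (by gcongr)

theorem measure_sum_dist_sq_lt_le [Fintype ι] [IsProbabilityMeasure μ]
    (hμ : IsRotationInvariant μ) (hb : Orthonormal ℝ b) (hδ : δ ≠ 0) {k m : ℕ}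
    (hkm : k + m ≤ Fintype.card ι) :
    μ {x | ∑ j, dist (x j) (b j) ^ 2 < m * δ ^ 2} ≤ (Fintype.card ι).choose k *
      (2 * δ : ℝ≥0∞) ^ ∑ l ∈ Finset.range k, (finrank ℝ E - (l + 1)) := by
  have hcover : {x : ι → E | ∑ j, dist (x j) (b j) ^ 2 < m * δ ^ 2} ⊆
      ⋃ I ∈ (Finset.univ : Finset ι).powersetCard k, (I : Set ι).pi fun j => ball (b j) δ := by
    intro x hx
    obtain ⟨I, hI, hIx⟩ :=
      exists_finset_card_eq_forall_mul_lt (fun j => sq_nonneg (dist (x j) (b j))) hx hkm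
    exact mem_iUnion₂.2 ⟨I, Finset.mem_powersetCard_univ.2 hI, fun j hj =>
      lt_of_pow_lt_pow_left₀ 2 δ.2 (lt_of_mul_lt_mul_left (hIx j hj) m.cast_nonneg)⟩
  calc μ {x | ∑ j, dist (x j) (b j) ^ 2 < m * δ ^ 2}
      ≤ ∑ I ∈ (Finset.univ : Finset ι).powersetCard k, μ ((I : Set ι).pi fun j => ball (b j) δ) :=
        (measure_mono hcover).trans (measure_biUnion_finset_le _ _)
    _ ≤ ∑ _I ∈ (Finset.univ : Finset ι).powersetCard k,
          (2 * δ : ℝ≥0∞) ^ ∑ l ∈ Finset.range k, (finrank ℝ E - (l + 1)) := by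
        refine Finset.sum_le_sum fun I hI => ?_
        rw [← Finset.mem_powersetCard_univ.1 hI]
        exact measure_pi_ball_le hμ hb hδ I
    _ = _ := by
        rw [Finset.sum_const, Finset.card_powersetCard, Finset.card_univ, nsmul_eq_mul]

theorem measure_sum_dist_sq_lt_le_two_pow_mul_pow [Fintype ι] [IsProbabilityMeasure μ]
    (hμ : IsRotationInvariant μ) (hb : Orthonormal ℝ b) {n : ℕ} (hι : Fintype.card ι = n)
    {s : ℝ≥0} (hs : s ≠ 0) (hs' : 3 * s ≤ 1) :
    μ {x | ∑ j, dist (x j) (b j) ^ 2 < n * s ^ 2} ≤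
      ENNReal.ofReal (2 ^ n * (3 * s) ^ (n / 2) ^ 2) := by
  -- Half of the squared distances are below `2 * s ^ 2`; `3 / 2` is a rational bound for `√2`.
  have hhalf : (n * s ^ 2 : ℝ) ≤ (n - n / 2 : ℕ) * ((3 / 2 * s : ℝ≥0) : ℝ) ^ 2 := by
    have : (n : ℝ) ≤ 2 * (n - n / 2 : ℕ) := by
      exact_mod_cast show n ≤ 2 * (n - n / 2) by omega
    push_cast
    nlinarith [sq_nonneg (s : ℝ)]
  have hdim : 2 * (n / 2) ≤ finrank ℝ E :=
    (Nat.mul_div_le n 2).trans (hι ▸ hb.linearIndependent.fintype_card_le_finrank)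
  have hthree : 2 * ((3 / 2 * s : ℝ≥0) : ℝ≥0∞) = (3 * s : ℝ≥0) := by
    rw [← ENNReal.coe_ofNat, ← ENNReal.coe_mul, ← mul_assoc, mul_div_cancel₀ 3 two_ne_zero]
  calc μ {x | ∑ j, dist (x j) (b j) ^ 2 < n * s ^ 2}
      ≤ μ {x | ∑ j, dist (x j) (b j) ^ 2 < (n - n / 2 : ℕ) * ((3 / 2 * s : ℝ≥0) : ℝ) ^ 2} :=
        measure_mono fun x hx => hx.trans_le hhalf
    _ ≤ n.choose (n / 2) * ((3 * s : ℝ≥0) : ℝ≥0∞) ^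
          ∑ l ∈ Finset.range (n / 2), (finrank ℝ E - (l + 1)) := by
        rw [← hι, ← hthree]
        exact measure_sum_dist_sq_lt_le hμ hb (by positivity) (by omega)
    _ ≤ 2 ^ n * ((3 * s : ℝ≥0) : ℝ≥0∞) ^ (n / 2) ^ 2 := by
        gcongr ?_ * ?_
        · exact_mod_cast Nat.choose_le_two_pow n (n / 2)
        · exact pow_le_pow_right_of_le_one' (by exact_mod_cast hs') (sq_le_sum_range_sub_succ hdim)
    _ = ENNReal.ofReal (2 ^ n * (3 * s) ^ (n / 2) ^ 2) := by
        rw [ENNReal.ofReal_mul (by positivity), ENNReal.ofReal_pow two_pos.le,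
          ENNReal.ofReal_pow (by positivity), ENNReal.ofReal_ofNat,
          ← NNReal.coe_ofNat, ← NNReal.coe_mul, ENNReal.ofReal_coe_nnreal]

theorem measure_sum_dist_sq_lt_sq_le_rpow [Fintype ι] [IsProbabilityMeasure μ]
    (hμ : IsRotationInvariant μ) (hb : Orthonormal ℝ b) {n : ℕ} (hι : Fintype.card ι = n)
    (hn : 2 ≤ n) {r : ℝ} (hr : 0 < r) :
    μ {x | ∑ j, dist (x j) (b j) ^ 2 < r ^ 2} ≤
      ENNReal.ofReal ((96 * r / √n) ^ ((n : ℝ) ^ 2 / 9)) := by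
  have hn0 : (0 : ℝ) < n := by exact_mod_cast two_pos.trans_le hn
  obtain ⟨s, hs⟩ : ∃ s : ℝ≥0, (s : ℝ) = r / √n := ⟨⟨r / √n, by positivity⟩, rfl⟩
  have hs0 : s ≠ 0 := by
    rw [← NNReal.coe_ne_zero, hs]
    positivity
  have hr_sq : r ^ 2 = n * s ^ 2 := by
    rw [hs, div_pow, Real.sq_sqrt hn0.le, mul_div_cancel₀ _ hn0.ne']
  rw [mul_div_assoc, ← hs, hr_sq]
  obtain hlarge | hsmall := lt_or_ge 1 (3 * s)
  · have : (1 : ℝ) < 3 * s := by exact_mod_cast hlarge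
    exact prob_le_one.trans
      (ENNReal.one_le_ofReal.2 (Real.one_le_rpow (by linarith) (by positivity)))
  · refine (measure_sum_dist_sq_lt_le_two_pow_mul_pow hμ hb hι hs0 hsmall).trans
      (ENNReal.ofReal_le_ofReal ?_)
    convert two_pow_mul_pow_half_sq_le hn (c := 3 * s) (by positivity) (by exact_mod_cast hsmall)
      using 2
    ring

end InvariantMeasure

section Columns

variable {m n : Type*}

instance {R : Type*} [Countable m] [Countable n] [TopologicalSpace R] [SecondCountableTopology R]
    [MeasurableSpace R] [BorelSpace R] : BorelSpace (Matrix m n R) :=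
  inferInstanceAs (BorelSpace (m → n → R))

/-- The columns of a matrix, as a family of vectors of a Euclidean space. It turns the
Hilbert–Schmidt distance into the `ℓ²` distance of families, and left multiplication by a rotation
matrix into the rotation of all vectors of the family. -/
def columns (x : Matrix m n ℝ) (j : n) : EuclideanSpace ℝ m := WithLp.toLp 2 (x.col j)

theorem measurable_columns : Measurable (columns : Matrix m n ℝ → n → EuclideanSpace ℝ m) :=
  measurable_pi_lambda _ fun j => (WithLp.measurable_toLp 2 _).comp <|
    measurable_pi_lambda _ fun i => (measurable_pi_apply j).comp (measurable_pi_apply i)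

theorem columns_mul [Fintype m] [DecidableEq m] (a : Matrix m m ℝ) (x : Matrix m n ℝ) (j : n) :
    columns (a * x) j = a.toEuclideanLin (columns x j) := by
  ext i
  simp [columns, Matrix.toLpLin_apply, Matrix.mulVec, Matrix.mul_apply, dotProduct]

theorem sum_dist_columns_basisFun_sq [Fintype m] [DecidableEq m] (x : Matrix m m ℝ) :
    ∑ j, dist (columns x j) (EuclideanSpace.basisFun m ℝ j) ^ 2 =
      ((x - 1)ᵀ * (x - 1)).trace := by
  have hbasis (j : m) : EuclideanSpace.basisFun m ℝ j = columns 1 j := by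
    ext i
    simp [columns, Matrix.one_apply, eq_comm]
  simp only [hbasis, dist_eq_norm, EuclideanSpace.norm_sq_eq, Matrix.trace, Matrix.diag,
    Matrix.mul_apply]
  simp [columns, sq]

end Columns

section SpecialOrthogonal

variable {n : ℕ} {μ : Measure (Matrix (Fin n) (Fin n) ℝ)}

theorem exists_mem_SO_toEuclideanLin_eq
    {g : EuclideanSpace ℝ (Fin n) ≃ₗᵢ[ℝ] EuclideanSpace ℝ (Fin n)}
    (hg : LinearMap.det g.toLinearMap = 1) : ∃ a ∈ SO n, a.toEuclideanLin = g.toLinearMap := by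
  let b := EuclideanSpace.basisFun (Fin n) ℝ
  refine ⟨LinearMap.toMatrix b.toBasis b.toBasis g.toLinearMap, ⟨?_, ?_⟩, ?_⟩
  · exact Matrix.mem_unitaryGroup_iff.1 (g.toMatrix_mem_unitaryGroup b b)
  · rw [LinearMap.det_toMatrix, hg]
  · rw [Matrix.toEuclideanLin_eq_toLin_orthonormal, Matrix.toLin_toMatrix]

theorem isRotationInvariant_map_columns (hμ : ∀ a ∈ SO n, μ.map (fun x => a * x) = μ) :
    IsRotationInvariant (μ.map columns) := by
  intro g hg
  obtain ⟨a, ha, hag⟩ := exists_mem_SO_toEuclideanLin_eq hg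
  have hmeas : Measurable fun (x : Fin n → EuclideanSpace ℝ (Fin n)) j => g (x j) := by fun_prop
  have hcomm : (fun (x : Fin n → EuclideanSpace ℝ (Fin n)) j => g (x j)) ∘ columns =
      columns ∘ (a * ·) := by
    ext1 x
    ext1 j
    exact (LinearMap.congr_fun hag _).symm.trans (columns_mul a x j).symm
  refine ⟨hmeas, ?_⟩
  rw [Measure.map_map hmeas measurable_columns, hcomm,
    ← Measure.map_map measurable_columns (measurable_const_mul a), hμ a ha]

theorem haar_measure_small_ball_bound_general [IsProbabilityMeasure μ]
    (hμ : ∀ a ∈ SO n, μ.map (fun x => a * x) = μ) (hn : 2 ≤ n) {r : ℝ} (hr : 0 < r) :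
    μ {x | √((x - 1)ᵀ * (x - 1)).trace < r} ≤
      ENNReal.ofReal ((96 * r / √n) ^ ((n : ℝ) ^ 2 / 9)) := by
  have hmap : IsProbabilityMeasure (μ.map columns) :=
    Measure.isProbabilityMeasure_map measurable_columns.aemeasurable
  have hpre : {x : Matrix (Fin n) (Fin n) ℝ | √((x - 1)ᵀ * (x - 1)).trace < r} =
      columns ⁻¹' {y | ∑ j, dist (y j) (EuclideanSpace.basisFun (Fin n) ℝ j) ^ 2 < r ^ 2} := by
    ext x
    simp only [mem_ofPred_eq, mem_preimage, sum_dist_columns_basisFun_sq, Real.sqrt_lt' hr]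
  rw [hpre]
  exact (Measure.le_map_apply measurable_columns.aemeasurable _).trans <|
    measure_sum_dist_sq_lt_sq_le_rpow (isRotationInvariant_map_columns hμ)
      (EuclideanSpace.basisFun (Fin n) ℝ).orthonormal (Fintype.card_fin n) hn hr

end SpecialOrthogonal

section Haar

theorem exists_isHaarLike_range {G X : Type*} [Group G] [TopologicalSpace G]
    [IsTopologicalGroup G] [CompactSpace G] [Monoid X] [TopologicalSpace X] [ContinuousMul X]
    [T2Space X] [MeasurableSpace X] [BorelSpace X] {ρ : G →* X} (hρ : Continuous ρ) :
    ∃ μ, IsHaarLike (range ρ) μ := by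
  borelize G
  let ν : Measure G := Measure.haarMeasure ⊤
  have hν : IsProbabilityMeasure ν := ⟨Measure.haarMeasure_self⟩
  have hleft (g : G) : (fun x => ρ g * x) ∘ ρ = ρ ∘ (g * ·) := by
    ext h
    exact (map_mul ρ g h).symm
  have hright (g : G) : (fun x => x * ρ g) ∘ ρ = ρ ∘ (· * g) := by
    ext h
    exact (map_mul ρ h g).symm
  refine ⟨ν.map ρ, Measure.isProbabilityMeasure_map hρ.aemeasurable, ?_, ?_⟩
  · rw [Measure.map_apply hρ.measurable (isCompact_range hρ).measurableSet.compl, preimage_compl,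
      preimage_range, compl_univ, measure_empty]
  · rintro _ ⟨g, rfl⟩
    have hνg : ν.map (· * g) = ν :=
      have : IsProbabilityMeasure (ν.map (· * g)) :=
        Measure.isProbabilityMeasure_map (measurable_mul_const g).aemeasurable
      Measure.isHaarMeasure_eq_of_isProbabilityMeasure _ _
    constructor
    · rw [Measure.map_map (measurable_const_mul _) hρ.measurable, hleft,
        ← Measure.map_map hρ.measurable (measurable_const_mul g), map_mul_left_eq_self]
    · rw [Measure.map_map (measurable_mul_const _) hρ.measurable, hright,
        ← Measure.map_map hρ.measurable (measurable_mul_const g), hνg]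

variable {n 𝕜 : Type*} [Fintype n] [DecidableEq n] [RCLike 𝕜]

instance : CompactSpace (Matrix.specialUnitaryGroup n 𝕜) := by
  refine isCompact_iff_compactSpace.1 ?_
  have hclosed : IsClosed (Matrix.specialUnitaryGroup n 𝕜 : Set (Matrix n n 𝕜)) :=
    isClosed_unitary.inter (isClosed_singleton.preimage continuous_id.matrix_det)
  exact (isCompact_closedBall (0 : 𝕜) 1).matrix.of_isClosed_subset hclosed fun a ha i j =>
    mem_closedBall_zero_iff.2 (entry_norm_bound_of_unitary ha.1 i j)

instance : IsTopologicalGroup (Matrix.specialUnitaryGroup n 𝕜) where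
  continuous_inv := continuous_induced_rng.2 continuous_subtype_val.star

end Haar

theorem SO_eq_range_subtype (n : ℕ) :
    SO n = range (Matrix.specialUnitaryGroup (Fin n) ℝ).subtype := by
  ext a
  rw [Submonoid.coe_subtype, Subtype.range_coe, SetLike.mem_coe,
    Matrix.mem_specialUnitaryGroup_iff, Matrix.mem_unitaryGroup_iff]
  rfl

theorem isHaarLike_haarLike_SO (n : ℕ) : IsHaarLike (SO n) (haarLike (SO n)) := by
  have h : ∃ μ, IsHaarLike (SO n) μ := by
    rw [SO_eq_range_subtype]
    exact exists_isHaarLike_range continuous_subtype_val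
  rw [haarLike, dif_pos h]
  exact h.choose_spec

/-- **Claim 1.** There are constants `φ, ψ > 0` such that for all `n ≥ 10` and
`0 < r < √n/10`, the Haar probability measure of the Hilbert–Schmidt ball of radius `r`
around the identity in `SO(n)` is at most `(e^φ r/√n)^{ψ n²}`. -/
theorem haar_measure_small_ball_bound :
    ∃ φ : ℝ, 0 < φ ∧ ∃ ψ : ℝ, 0 < ψ ∧
      ∀ n : ℕ, 10 ≤ n → ∀ r : ℝ, 0 < r → r < Real.sqrt n / 10 →
        haarLike (SO n)
            {x : Matrix (Fin n) (Fin n) ℝ |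
              Real.sqrt (Matrix.trace ((x - 1)ᵀ * (x - 1))) < r} ≤
          ENNReal.ofReal ((Real.exp φ * r / Real.sqrt n) ^ (ψ * (n : ℝ) ^ 2)) := by
  refine ⟨Real.log 96, Real.log_pos (by norm_num), 1 / 9, by norm_num, fun n hn r hr _ => ?_⟩
  obtain ⟨_, -, hinv⟩ := isHaarLike_haarLike_SO n
  rw [Real.exp_log (by norm_num), one_div_mul_eq_div]
  exact haar_measure_small_ball_bound_general (fun a ha => (hinv a ha).1) (by omega) hr

end
end

section
/- For every integer n ≥ 2 and all a, b ∈ SO(n), the intrinsic metric satisfies D(a,b) ≤ π√n; that is, the diameter of SO(n) in the metric D is at most π√n. -/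
open MeasureTheory ENNReal Filter Topology Matrix

noncomputable section

/-!
Every `Q ∈ SO(n)` is `exp X` for a skew-symmetric `X` with `‖X‖ ≤ π√n`, and for `Q = a⁻¹b` the
curve `t ↦ a exp(tX)` runs from `a` to `b` inside `SO(n)` at constant speed `‖X‖`.

To find `X`, diagonalise the symmetric part of `Q` as `diag(cos θ i)` with `θ i ∈ [0, π]`. Its skew
part `K` then satisfies `K² = -diag((sin θ i)²)`, so away from the eigenvalue `-1` one can take
`X = diag(sinc θ i)⁻¹ K`. Since `det Q = 1`, the eigenvalue `-1` has even multiplicity, so its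
eigenspace carries a complex structure `J`, on which one takes `X = πJ`.
Then `X² = -diag((θ i)²)`, whence `‖X‖² = ∑ i, (θ i)² ≤ nπ²`.
-/

open NormedSpace (exp)
open Real (cos sin sinc)
open scoped Real Matrix.Norms.Frobenius

section PathLength

lemma sum_succ_sub_castSucc {G : Type*} [AddCommGroup G] {k : ℕ} (t : Fin (k + 1) → G) :
    ∑ i : Fin k, (t i.succ - t i.castSucc) = t (Fin.last k) - t 0 := by
  rw [Finset.sum_sub_distrib, sub_eq_sub_iff_add_eq_add, add_comm, ← Fin.sum_univ_succ,
    Fin.sum_univ_castSucc, add_comm]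

lemma pathLengthE_edist_le_of_lipschitzOnWith {X : Type*} [PseudoEMetricSpace X] {γ : ℝ → X}
    {C : NNReal} (hγ : LipschitzOnWith C γ (Set.Icc 0 1)) : pathLengthE edist γ ≤ C := by
  refine iSup_le fun k => iSup_le fun t => iSup_le fun ht => iSup_le fun h0 => iSup_le fun h1 => ?_
  have hmem : ∀ i, t i ∈ Set.Icc (0 : ℝ) 1 := fun i =>
    ⟨h0 ▸ ht (Fin.zero_le i), h1 ▸ ht (Fin.le_last i)⟩
  have hstep : ∀ i : Fin k, 0 ≤ t i.succ - t i.castSucc := fun i =>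
    sub_nonneg.mpr (ht i.castSucc_lt_succ.le)
  calc ∑ i : Fin k, edist (γ (t i.castSucc)) (γ (t i.succ))
      ≤ ∑ i : Fin k, C * edist (t i.castSucc) (t i.succ) :=
        Finset.sum_le_sum fun i _ => hγ (hmem _) (hmem _)
    _ = C * ∑ i : Fin k, ENNReal.ofReal (t i.succ - t i.castSucc) := by
        rw [Finset.mul_sum]
        refine Finset.sum_congr rfl fun i _ => ?_
        rw [edist_comm, edist_dist, Real.dist_eq, abs_of_nonneg (hstep i)]
    _ = C := by
        rw [← ENNReal.ofReal_sum_of_nonneg fun i _ => hstep i, sum_succ_sub_castSucc, h0, h1,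
          sub_zero, ENNReal.ofReal_one, mul_one]

end PathLength

section FrobeniusNorm

variable {l m n : Type*} [Fintype l] [Fintype m] [Fintype n]

lemma frobenius_norm_eq_sqrt_trace (A : Matrix m n ℝ) : ‖A‖ = √(trace (Aᵀ * A)) := by
  rw [frobenius_norm_def, Real.sqrt_eq_rpow, Finset.sum_comm]
  simp [trace, mul_apply, sq]

variable [DecidableEq m]

lemma frobenius_norm_mul_left {U : Matrix l m ℝ} (hU : Uᵀ * U = 1) (A : Matrix m n ℝ) :
    ‖U * A‖ = ‖A‖ := by
  rw [frobenius_norm_eq_sqrt_trace, frobenius_norm_eq_sqrt_trace, transpose_mul, Matrix.mul_assoc,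
    ← Matrix.mul_assoc Uᵀ, hU, Matrix.one_mul]

lemma frobenius_norm_conj {U : Matrix l m ℝ} (hU : Uᵀ * U = 1) (A : Matrix m m ℝ) :
    ‖U * A * Uᵀ‖ = ‖A‖ := by
  rw [Matrix.mul_assoc, frobenius_norm_mul_left hU, ← frobenius_norm_transpose, transpose_mul,
    transpose_transpose, frobenius_norm_mul_left hU, frobenius_norm_transpose]

end FrobeniusNorm

section Skew

variable {m : Type*} [Fintype m] [DecidableEq m] {X : Matrix m m ℝ}

lemma exp_mem_specialOrthogonalGroup (hX : Xᵀ = -X) : exp X ∈ specialOrthogonalGroup m ℝ := by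
  have orthogonal : ∀ {Y : Matrix m m ℝ}, Yᵀ = -Y → exp Y ∈ orthogonalGroup m ℝ := fun hY =>
    NormedSpace.exp_mem_unitary_of_mem_skewAdjoint hY
  refine ⟨orthogonal hX, ?_⟩
  -- `exp X` is the square of `exp (X / 2)`, whose determinant is `±1`.
  have hhalf : exp X = exp ((1 / 2 : ℝ) • X) * exp ((1 / 2 : ℝ) • X) := by
    rw [← exp_add_of_commute _ _ (Commute.refl _), ← add_smul, add_halves, one_smul]
  have hdet := congrArg det <| mem_orthogonalGroup_iff m ℝ |>.mp <|
    orthogonal (Y := (1 / 2 : ℝ) • X) (by rw [transpose_smul, hX, smul_neg])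
  rw [det_mul, det_transpose, det_one, ← det_mul, ← hhalf] at hdet
  exact hdet

lemma lipschitzWith_mul_exp_smul {U : Matrix m m ℝ} (hU : Uᵀ * U = 1) (hX : Xᵀ = -X) :
    LipschitzWith ‖X‖₊ fun t : ℝ => U * exp (t • X) := by
  have hderiv : ∀ t : ℝ, HasDerivAt (fun t : ℝ => U * exp (t • X)) (U * (exp (t • X) * X)) t :=
    fun t => (hasDerivAt_exp_smul_const X t).const_mul U
  refine lipschitzWith_of_nnnorm_deriv_le (fun t => (hderiv t).differentiableAt) fun t => ?_
  have horth : (exp (t • X))ᵀ * exp (t • X) = 1 :=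
    mem_orthogonalGroup_iff' m ℝ |>.mp (exp_mem_specialOrthogonalGroup (X := t • X)
      (by rw [transpose_smul, hX, smul_neg])).1
  rw [(hderiv t).deriv, ← NNReal.coe_le_coe, coe_nnnorm, coe_nnnorm, frobenius_norm_mul_left hU,
    frobenius_norm_mul_left horth]

end Skew

section IntrinsicDistance

variable {n : ℕ}

lemma hsDist_eq_edist : hsDist (n := n) = edist := by
  ext a b
  rw [hsDist, edist_dist, dist_eq_norm, frobenius_norm_eq_sqrt_trace]

lemma SO_eq_specialOrthogonalGroup : SO n = specialOrthogonalGroup (Fin n) ℝ := by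
  ext a
  exact and_congr_left' (mem_orthogonalGroup_iff (Fin n) ℝ).symm

lemma DSO_mul_exp_le {a X : Matrix (Fin n) (Fin n) ℝ} (ha : a ∈ SO n) (hX : Xᵀ = -X) :
    DSO n a (a * exp X) ≤ ENNReal.ofReal ‖X‖ := by
  have hlip : LipschitzWith ‖X‖₊ fun t : ℝ => a * exp (t • X) :=
    lipschitzWith_mul_exp_smul (mul_eq_one_comm.mp ha.1) hX
  refine iInf₂_le_of_le (fun t : ℝ => a * exp (t • X)) hlip.continuous.continuousOn <|
    iInf₂_le_of_le (fun t _ => ?_) (by simp) <| iInf_le_of_le (by simp) ?_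
  · rw [SO_eq_specialOrthogonalGroup] at ha ⊢
    exact mul_mem ha (exp_mem_specialOrthogonalGroup (by rw [transpose_smul, hX, smul_neg]))
  · rw [hsDist_eq_edist, ofReal_norm]
    exact pathLengthE_edist_le_of_lipschitzOnWith hlip.lipschitzOnWith

end IntrinsicDistance

section Sinc

lemma sinc_mul_self (x : ℝ) : sinc x * x = sin x := by
  rcases eq_or_ne x 0 with rfl | hx
  · simp
  · rw [Real.sinc_of_ne_zero hx, div_mul_cancel₀ _ hx]

lemma sinc_pos {x : ℝ} (h0 : 0 ≤ x) (hpi : x < π) : 0 < sinc x := by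
  rcases h0.eq_or_lt with rfl | hx
  · rw [Real.sinc_zero]
    exact one_pos
  · rw [Real.sinc_of_ne_zero hx.ne']
    exact div_pos (Real.sin_pos_of_pos_of_lt_pi hx hpi) hx

lemma hasSum_sinc (x : ℝ) :
    HasSum (fun k : ℕ => (-1) ^ k * x ^ (2 * k) / ((2 * k + 1).factorial : ℝ)) (sinc x) := by
  rcases eq_or_ne x 0 with rfl | hx
  · rw [Real.sinc_zero]
    convert hasSum_single (0 : ℕ) fun k hk => ?_ using 1
    · simp
    · simp [hk]
  · rw [Real.sinc_of_ne_zero hx]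
    refine ((Real.hasSum_sin x).div_const x).congr_fun fun k => ?_
    rw [pow_succ]
    field_simp

end Sinc

/-- `X` is an infinitesimal rotation with angles `θ`: it is skew-symmetric and acts on the `i`-th
coordinate vector with `X² eᵢ = -(θ i)² eᵢ`. These are the logarithms from which geodesics of
`SO(n)` are built. The angles are indexed by coordinates, so each plane rotated by `X` through a
nonzero angle contributes that angle twice, and only `|θ i|` is determined by `X`. -/
structure IsRotationGenerator {m : Type*} [Fintype m] [DecidableEq m] (θ : m → ℝ)
    (X : Matrix m m ℝ) : Prop where
  transpose_eq : Xᵀ = -X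
  mul_self : X * X = -diagonal fun i => θ i ^ 2

namespace IsRotationGenerator

variable {m : Type*} [Fintype m] [DecidableEq m] {θ φ : m → ℝ} {X Y : Matrix m m ℝ}

lemma transpose_mul_self (hX : IsRotationGenerator θ X) :
    Xᵀ * X = diagonal fun i => θ i ^ 2 := by
  rw [hX.transpose_eq, neg_mul, hX.mul_self, neg_neg]

lemma norm_le (hX : IsRotationGenerator θ X) {r : ℝ} (hr : 0 ≤ r) (hθ : ∀ i, |θ i| ≤ r) :
    ‖X‖ ≤ r * √(Fintype.card m) := by
  rw [frobenius_norm_eq_sqrt_trace, hX.transpose_mul_self, trace_diagonal]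
  refine Real.sqrt_le_iff.mpr ⟨by positivity, ?_⟩
  calc ∑ i, θ i ^ 2 ≤ ∑ _i : m, r ^ 2 :=
        Finset.sum_le_sum fun i _ => sq_le_sq.mpr ((hθ i).trans (le_abs_self r))
    _ = (r * √(Fintype.card m)) ^ 2 := by
        rw [Finset.sum_const, Finset.card_univ, nsmul_eq_mul, mul_pow,
          Real.sq_sqrt (Nat.cast_nonneg _), mul_comm]

lemma apply_eq_zero_of_right (hX : IsRotationGenerator θ X) {j : m} (hj : θ j = 0) (i : m) :
    X i j = 0 := by
  have hsum : ∑ i, X i j * X i j = 0 := by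
    simpa [mul_apply, hj] using congrFun (congrFun hX.transpose_mul_self j) j
  rw [Finset.sum_eq_zero_iff_of_nonneg fun i _ => mul_self_nonneg (X i j)] at hsum
  exact mul_self_eq_zero.mp (hsum i (Finset.mem_univ i))

lemma apply_eq_zero_of_left (hX : IsRotationGenerator θ X) {i : m} (hi : θ i = 0) (j : m) :
    X i j = 0 := by
  have hskew : X i j = -X j i := congrFun (congrFun hX.transpose_eq j) i
  rw [hskew, hX.apply_eq_zero_of_right hi, neg_zero]

lemma diagonal_mul_eq_diagonal_mul (hX : IsRotationGenerator θ X) {f g : m → ℝ}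
    (h : ∀ i, θ i ≠ 0 → f i = g i) : diagonal f * X = diagonal g * X := by
  ext i j
  rw [diagonal_mul, diagonal_mul]
  by_cases hi : θ i = 0
  · rw [hX.apply_eq_zero_of_left hi, mul_zero, mul_zero]
  · rw [h i hi]

lemma mul_eq_zero (hX : IsRotationGenerator θ X) (hY : IsRotationGenerator φ Y)
    (h : ∀ i, θ i = 0 ∨ φ i = 0) : X * Y = 0 := by
  ext i j
  refine Finset.sum_eq_zero fun k _ => ?_
  rcases h k with hk | hk
  · exact mul_eq_zero_of_left (hX.apply_eq_zero_of_right hk i) _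
  · exact mul_eq_zero_of_right _ (hY.apply_eq_zero_of_left hk j)

lemma add (hX : IsRotationGenerator θ X) (hY : IsRotationGenerator φ Y)
    (h : ∀ i, θ i = 0 ∨ φ i = 0) : IsRotationGenerator (θ + φ) (X + Y) where
  transpose_eq := by rw [transpose_add, hX.transpose_eq, hY.transpose_eq, neg_add]
  mul_self := by
    rw [add_mul, mul_add, mul_add, hX.mul_eq_zero hY h, hY.mul_eq_zero hX fun i => (h i).symm,
      add_zero, zero_add, hX.mul_self, hY.mul_self, ← neg_add, diagonal_add]
    congr 2
    ext i
    rcases h i with hi | hi <;> simp [hi]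

lemma exp_add (hX : IsRotationGenerator θ X) (hY : IsRotationGenerator φ Y)
    (h : ∀ i, θ i = 0 ∨ φ i = 0) : exp (X + Y) = exp X * exp Y :=
  exp_add_of_commute X Y <|
    (hX.mul_eq_zero hY h).trans (hY.mul_eq_zero hX fun i => (h i).symm).symm

lemma diagonal_mul_of_commute (hX : IsRotationGenerator θ X) {f : m → ℝ}
    (hf : Commute (diagonal f) X) : IsRotationGenerator (f * θ) (diagonal f * X) where
  transpose_eq := by
    rw [transpose_mul, diagonal_transpose, hX.transpose_eq, Matrix.neg_mul, hf.eq]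
  mul_self := by
    rw [hf.symm.mul_mul_mul_comm, hX.mul_self, diagonal_mul_diagonal, mul_neg,
      diagonal_mul_diagonal]
    simp only [Pi.mul_apply, mul_pow, ← sq]

-- The even and odd powers of `X` are `X ^ (2 * k) = diag ((-1) ^ k * θ i ^ (2 * k))` and
-- `X ^ (2 * k) * X`, so the exponential series splits into those of `cos` and `sinc`.
lemma exp_eq (hX : IsRotationGenerator θ X) :
    exp X = diagonal (fun i => cos (θ i)) + diagonal (fun i => sinc (θ i)) * X := by
  have heven : ∀ k, X ^ (2 * k) = diagonal fun i => (-1) ^ k * θ i ^ (2 * k) := fun k => by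
    rw [pow_mul, sq, hX.mul_self, diagonal_neg, diagonal_pow]
    congr 1
    ext i
    rw [Pi.pow_apply, neg_pow, pow_mul]
  let series : ℕ → Matrix m m ℝ := fun n => ((n.factorial : ℝ)⁻¹) • X ^ n
  have hcos : HasSum (fun k => series (2 * k)) (diagonal fun i => cos (θ i)) := by
    simp only [series, heven, ← diagonal_smul]
    refine HasSum.matrix_diagonal (Pi.hasSum.mpr fun i => ?_)
    simpa only [Pi.smul_apply, smul_eq_mul, div_eq_inv_mul] using Real.hasSum_cos (θ i)
  have hsinc : HasSum (fun k => series (2 * k + 1)) (diagonal (fun i => sinc (θ i)) * X) := by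
    simp only [series, pow_succ, heven, ← smul_mul_assoc, ← diagonal_smul]
    refine (HasSum.matrix_diagonal (Pi.hasSum.mpr fun i => ?_)).mul_right X
    simpa only [Pi.smul_apply, smul_eq_mul, div_eq_inv_mul] using hasSum_sinc (θ i)
  exact (NormedSpace.exp_series_hasSum_exp' (𝕂 := ℝ) X).unique (hcos.even_add_odd hsinc)

lemma exp_eq_diagonal_cos (hX : IsRotationGenerator θ X) (hθ : ∀ i, sin (θ i) = 0) :
    exp X = diagonal fun i => cos (θ i) := by
  have hsinc : diagonal (fun i => sinc (θ i)) * X = diagonal (fun _ => 0) * X :=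
    hX.diagonal_mul_eq_diagonal_mul fun i hi => by
      rw [Real.sinc_of_ne_zero hi, hθ i, zero_div]
  rw [hX.exp_eq, hsinc, diagonal_zero, Matrix.zero_mul, add_zero]

lemma exists_exp_eq_diagonal_cos_add {K : Matrix m m ℝ}
    (hK : IsRotationGenerator (fun i => sin (φ i)) K) (hφ : ∀ i, sinc (φ i) ≠ 0)
    (hcomm : Commute (diagonal fun i => (sinc (φ i))⁻¹) K) :
    ∃ X, IsRotationGenerator φ X ∧ exp X = diagonal (fun i => cos (φ i)) + K := by
  have hangle : (fun i => (sinc (φ i))⁻¹) * (fun i => sin (φ i)) = φ := by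
    ext i
    rw [Pi.mul_apply, inv_mul_eq_iff_eq_mul₀ (hφ i), sinc_mul_self]
  have hX := hangle ▸ hK.diagonal_mul_of_commute hcomm
  refine ⟨_, hX, ?_⟩
  rw [hX.exp_eq, ← Matrix.mul_assoc, diagonal_mul_diagonal]
  simp only [mul_inv_cancel₀ (hφ _), diagonal_one, Matrix.one_mul]

end IsRotationGenerator

section Logarithm

variable {m : Type*} [Fintype m]

lemma prod_ite_neg_one_eq_one_iff {R : Type*} [CommRing R] (hR : (-1 : R) ≠ 1) (p : m → Prop)
    [DecidablePred p] :
    ∏ i, (if p i then (-1 : R) else 1) = 1 ↔ Even (Fintype.card {i // p i}) := by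
  rw [Finset.prod_ite, Finset.prod_const, Finset.prod_const_one, mul_one,
    ← Fintype.card_subtype, neg_one_pow_eq_one_iff_even hR]

variable [DecidableEq m]

lemma commute_diagonal_of_factorsThrough {R : Type*} [CommSemiring R] [IsCancelMulZero R]
    {d e : m → R} {A : Matrix m m R} (h : Commute (diagonal d) A) (hed : e.FactorsThrough d) :
    Commute (diagonal e) A := by
  ext i j
  have hij := congrFun (congrFun h.eq i) j
  rw [diagonal_mul, mul_diagonal, mul_comm] at hij
  rw [diagonal_mul, mul_diagonal, mul_comm]
  by_cases hA : A i j = 0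
  · rw [hA, zero_mul, zero_mul]
  · rw [hed (mul_left_cancel₀ hA hij)]

lemma exists_isRotationGenerator_ite_of_even (p : m → Prop) [DecidablePred p]
    (hp : Even (Fintype.card {i // p i})) (c : ℝ) :
    ∃ X : Matrix m m ℝ, IsRotationGenerator (fun i => if p i then c else 0) X := by
  obtain ⟨k, hk⟩ := hp
  have hcard : Fintype.card {i // p i} = Fintype.card (Fin k ⊕ Fin k) := by simp [hk]
  let e : m ≃ (Fin k ⊕ Fin k) ⊕ {i // ¬ p i} :=
    (Equiv.sumCompl p).symm.trans (Equiv.sumCongr (Fintype.equivOfCardEq hcard) (Equiv.refl _))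
  let B : Matrix ((Fin k ⊕ Fin k) ⊕ {i // ¬ p i}) ((Fin k ⊕ Fin k) ⊕ {i // ¬ p i}) ℝ :=
    fromBlocks (c • Matrix.J (Fin k) ℝ) 0 0 0
  have hBt : Bᵀ = -B := by simp [B, fromBlocks_transpose, fromBlocks_neg]
  have hB : B * B = diagonal (Sum.elim (fun _ => -c ^ 2) 0) := by
    rw [fromBlocks_multiply, Matrix.smul_mul, Matrix.mul_smul, J_squared]
    simp [← fromBlocks_diagonal, smul_smul, ← sq, ← smul_one_eq_diagonal]
  refine ⟨B.submatrix e e, by rw [transpose_submatrix, hBt]; rfl, ?_⟩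
  rw [submatrix_mul_equiv, hB, submatrix_diagonal_equiv, diagonal_neg]
  congr 1
  ext i
  by_cases hi : p i <;> simp [e, hi]

lemma commute_diagonal_of_add_transpose_eq {Q : Matrix m m ℝ} {d e : m → ℝ}
    (hQ : Q ∈ orthogonalGroup m ℝ) (hd : Q + Qᵀ = diagonal d) (hed : e.FactorsThrough d) :
    Commute (diagonal e) Q := by
  have hnormal : Commute Qᵀ Q := (mem_orthogonalGroup_iff' m ℝ |>.mp hQ).trans
    (mem_orthogonalGroup_iff m ℝ |>.mp hQ).symm
  have hcomm : Commute (Q + Qᵀ) Q := (Commute.refl Q).add_left hnormal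
  exact commute_diagonal_of_factorsThrough (hd ▸ hcomm) hed

lemma isRotationGenerator_sub_diagonal_cos {Q : Matrix m m ℝ} {θ : m → ℝ}
    (hQ : Q ∈ orthogonalGroup m ℝ) (hsymm : Q + Qᵀ = diagonal fun i => 2 * cos (θ i)) :
    IsRotationGenerator (fun i => sin (θ i)) (Q - diagonal fun i => cos (θ i)) := by
  have hcomm : Commute (diagonal fun i => cos (θ i)) Q :=
    commute_diagonal_of_add_transpose_eq hQ hsymm fun _ _ h => mul_left_cancel₀ two_ne_zero h
  set C := diagonal fun i => cos (θ i)
  have hC : Qᵀ = C + C - Q := by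
    rw [eq_sub_iff_add_eq', hsymm, diagonal_add]
    simp only [two_mul]
  have hsin : (diagonal fun i => sin (θ i) ^ 2) = 1 - C * C := by
    rw [diagonal_mul_diagonal, ← diagonal_one, diagonal_sub]
    simp only [Real.sin_sq, ← sq]
  constructor
  · rw [transpose_sub, hC, diagonal_transpose]
    abel
  · calc (Q - C) * (Q - C) = C * C - Qᵀ * Q := by
          rw [hC, sub_mul, sub_mul, mul_sub, mul_sub, add_mul, hcomm.eq]
          abel
      _ = -diagonal fun i => sin (θ i) ^ 2 := by
          rw [mem_orthogonalGroup_iff' m ℝ |>.mp hQ, hsin, neg_sub]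

lemma exists_eq_diagonal_mul_exp {Q : Matrix m m ℝ} {θ : m → ℝ} (hQ : Q ∈ orthogonalGroup m ℝ)
    (hθ : ∀ i, θ i ∈ Set.Icc 0 π) (hsymm : Q + Qᵀ = diagonal fun i => 2 * cos (θ i)) :
    ∃ X, IsRotationGenerator (fun i => if θ i = π then 0 else θ i) X ∧
      Q = diagonal (fun i => if θ i = π then -1 else 1) * exp X := by
  set K := Q - diagonal fun i => cos (θ i) with hK
  have hKgen : IsRotationGenerator (fun i => sin (θ i)) K :=
    isRotationGenerator_sub_diagonal_cos hQ hsymm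
  have hKcut : IsRotationGenerator (fun i => sin (if θ i = π then 0 else θ i)) K := by
    convert hKgen using 2 with i
    split_ifs with hi <;> simp [hi]
  have hsinc : ∀ i, sinc (if θ i = π then 0 else θ i) ≠ 0 := fun i => by
    split_ifs with hi
    · exact Real.sinc_zero ▸ one_ne_zero
    · exact (sinc_pos (hθ i).1 ((hθ i).2.lt_of_ne hi)).ne'
  have hcomm : Commute (diagonal fun i => (sinc (if θ i = π then 0 else θ i))⁻¹) K := by
    refine (commute_diagonal_of_add_transpose_eq hQ hsymm fun i j hij => ?_).sub_right
      (commute_diagonal _ _)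
    simp only [Real.injOn_cos (hθ i) (hθ j) (mul_left_cancel₀ two_ne_zero hij)]
  obtain ⟨X, hX, hexp⟩ := hKcut.exists_exp_eq_diagonal_cos_add hsinc hcomm
  refine ⟨X, hX, ?_⟩
  have hsign : diagonal (fun i => if θ i = π then -1 else 1) * K = K := by
    rw [hKgen.diagonal_mul_eq_diagonal_mul fun i hi =>
      if_neg fun h : θ i = π => hi (h ▸ Real.sin_pi), diagonal_one, Matrix.one_mul]
  have hcos : ∀ i, (if θ i = π then -1 else 1) *
      cos (if θ i = π then 0 else θ i) = cos (θ i) := fun i => by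
    split_ifs with hi <;> simp [hi]
  rw [hexp, mul_add, hsign, diagonal_mul_diagonal]
  simp only [hcos, hK, add_sub_cancel]

lemma exists_isRotationGenerator_exp_eq {Q : Matrix m m ℝ} {θ : m → ℝ}
    (hQ : Q ∈ specialOrthogonalGroup m ℝ) (hθ : ∀ i, θ i ∈ Set.Icc 0 π)
    (hsymm : Q + Qᵀ = diagonal fun i => 2 * cos (θ i)) :
    ∃ X, IsRotationGenerator θ X ∧ exp X = Q := by
  obtain ⟨X, hX, hQX⟩ := exists_eq_diagonal_mul_exp hQ.1 hθ hsymm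
  have heven : Even (Fintype.card {i // θ i = π}) := by
    have hdet : det Q = 1 := hQ.2
    have hdetX : det (exp X) = 1 := (exp_mem_specialOrthogonalGroup hX.transpose_eq).2
    rw [hQX, det_mul, hdetX, mul_one, det_diagonal] at hdet
    exact (prod_ite_neg_one_eq_one_iff (by norm_num) _).mp hdet
  obtain ⟨Y, hY⟩ := exists_isRotationGenerator_ite_of_even _ heven π
  have hexpY : exp Y = diagonal fun i => if θ i = π then -1 else 1 := by
    rw [hY.exp_eq_diagonal_cos fun i => by split_ifs <;> simp]
    simp only [apply_ite cos, Real.cos_pi, Real.cos_zero]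
  have hdisjoint : ∀ i, (if θ i = π then π else 0) = 0 ∨ (if θ i = π then 0 else θ i) = 0 :=
    fun i => by split_ifs <;> simp
  refine ⟨Y + X, ?_, by rw [hY.exp_add hX hdisjoint, hexpY, hQX]⟩
  convert hY.add hX hdisjoint using 1
  ext i
  rw [Pi.add_apply]
  split_ifs with hi <;> simp [hi]

lemma exists_add_transpose_eq_of_isDiag {Q : Matrix m m ℝ} (hQ : Q ∈ orthogonalGroup m ℝ)
    (hdiag : (Q + Qᵀ).IsDiag) :
    ∃ θ : m → ℝ, (∀ i, θ i ∈ Set.Icc 0 π) ∧ Q + Qᵀ = diagonal fun i => 2 * cos (θ i) := by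
  refine ⟨fun i => Real.arccos (Q i i), fun i => ⟨Real.arccos_nonneg _, Real.arccos_le_pi _⟩, ?_⟩
  rw [← hdiag.diagonal_diag]
  congr 1
  ext i
  have hentry : |Q i i| ≤ 1 := entry_norm_bound_of_unitary hQ i i
  rw [Real.cos_arccos (abs_le.mp hentry).1 (abs_le.mp hentry).2, two_mul]
  rfl

lemma exists_orthogonal_conj_isDiag {S : Matrix m m ℝ} (hS : S.IsSymm) :
    ∃ U ∈ orthogonalGroup m ℝ, (Uᵀ * S * U).IsDiag := by
  have hherm : S.IsHermitian := by rwa [IsHermitian, conjTranspose_eq_transpose_of_trivial]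
  refine ⟨hherm.eigenvectorUnitary, hherm.eigenvectorUnitary.2, ?_⟩
  have hconj := hherm.conjStarAlgAut_star_eigenvectorUnitary
  rw [Unitary.conjStarAlgAut_star_apply] at hconj
  exact hconj ▸ isDiag_diagonal _

theorem exists_exp_eq_of_mem_specialOrthogonalGroup {Q : Matrix m m ℝ}
    (hQ : Q ∈ specialOrthogonalGroup m ℝ) :
    ∃ X : Matrix m m ℝ, Xᵀ = -X ∧ ‖X‖ ≤ π * √(Fintype.card m) ∧ exp X = Q := by
  obtain ⟨U, hU, hdiag⟩ := exists_orthogonal_conj_isDiag (isSymm_add_transpose_self Q)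
  have hUtU : Uᵀ * U = 1 := mem_orthogonalGroup_iff' m ℝ |>.mp hU
  have hUUt : U * Uᵀ = 1 := mem_orthogonalGroup_iff m ℝ |>.mp hU
  set R := Uᵀ * Q * U with hR
  have hRmem : R ∈ specialOrthogonalGroup m ℝ :=
    ⟨mul_mem (mul_mem (Unitary.star_mem hU) hQ.1) hU,
      (det_conj_of_mul_eq_one hUtU hUUt).trans hQ.2⟩
  have hRdiag : (R + Rᵀ).IsDiag := by
    simpa only [hR, transpose_mul, transpose_transpose, mul_add, add_mul, Matrix.mul_assoc]
      using hdiag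
  obtain ⟨θ, hθ, hsymm⟩ := exists_add_transpose_eq_of_isDiag hRmem.1 hRdiag
  obtain ⟨X, hX, hexp⟩ := exists_isRotationGenerator_exp_eq hRmem hθ hsymm
  refine ⟨U * X * Uᵀ, ?_, ?_, ?_⟩
  · rw [transpose_mul, transpose_mul, transpose_transpose, hX.transpose_eq, neg_mul, mul_neg,
      Matrix.mul_assoc]
  · rw [frobenius_norm_conj hUtU]
    exact hX.norm_le Real.pi_nonneg fun i => (abs_of_nonneg (hθ i).1).trans_le (hθ i).2
  · rw [← inv_eq_right_inv hUUt, exp_conj U X (.of_mul_eq_one _ hUUt),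
      inv_eq_right_inv hUUt, hexp, hR]
    simp only [← Matrix.mul_assoc, hUUt, Matrix.one_mul]
    rw [Matrix.mul_assoc, hUUt, Matrix.mul_one]

end Logarithm

/-- For every `n ≥ 2` and all `a, b ∈ SO(n)`, the intrinsic metric induced by the
Hilbert–Schmidt norm satisfies `D(a,b) ≤ π√n`; that is, the diameter of `SO(n)` in the
metric `D` is at most `π√n`. -/
theorem diameter_SO_le (n : ℕ) (hn : 2 ≤ n)
    (a b : Matrix (Fin n) (Fin n) ℝ) (ha : a ∈ SO n) (hb : b ∈ SO n) :
    DSO n a b ≤ ENNReal.ofReal (Real.pi * Real.sqrt n) := by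
  have hQ : aᵀ * b ∈ specialOrthogonalGroup (Fin n) ℝ := by
    rw [SO_eq_specialOrthogonalGroup] at ha hb
    exact mul_mem (star (⟨a, ha⟩ : specialOrthogonalGroup (Fin n) ℝ)).2 hb
  obtain ⟨X, hX, hnorm, hexp⟩ := exists_exp_eq_of_mem_specialOrthogonalGroup hQ
  calc DSO n a b = DSO n a (a * exp X) := by
        rw [hexp, ← Matrix.mul_assoc, ha.1, Matrix.one_mul]
    _ ≤ ENNReal.ofReal ‖X‖ := DSO_mul_exp_le ha hX
    _ ≤ ENNReal.ofReal (Real.pi * √n) := by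
        rw [Fintype.card_fin] at hnorm
        exact ENNReal.ofReal_le_ofReal hnorm

end
end
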